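/- Let F be an algebraically closed field of characteristic ≠ 2, m ≥ 1 an integer, and q ∈ F with q ≠ 0, q ≠ ±1, and q² not a root of unity. Let A be the quantum Smith algebra: the unital associative F-algebra with generators E, F', K, K^{−1} and defining relations KE = q²EK, KF' = q^{−2}F'K, KK^{−1} = K^{−1}K = 1, and EF' − F'E = (K^m − K^{−m})/(q − q^{−1}); and put c = F'E + (q^mK^m + q^{−m}K^{−m})/((q^m − q^{−m})(q − q^{−1})) in A. If V is a simple A-module with a vector w such that V = A·w and E·w = ζ·w for some nonzero ζ ∈ F, then there exists ϑ ∈ F such that Ann_A(V) = A·(c − ϑ). -/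

import Mathlib

universe u v

/-- The defining relations of the quantum Smith algebra: `KE = q²EK`, `KF' = q⁻²F'K`,
`KK⁻¹ = K⁻¹K = 1`, `EF' − F'E = (K^m − K^{−m})/(q − q⁻¹)`
(here `0 ↦ E`, `1 ↦ F'`, `2 ↦ K`, `3 ↦ K⁻¹`). -/
inductive QSmithRel (F : Type u) [Field F] (q : F) (m : ℕ) :
    FreeAlgebra F (Fin 4) → FreeAlgebra F (Fin 4) → Prop
  | KE : QSmithRel F q m
      (FreeAlgebra.ι F 2 * FreeAlgebra.ι F 0)
      (algebraMap F (FreeAlgebra F (Fin 4)) (q ^ 2) *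
        (FreeAlgebra.ι F 0 * FreeAlgebra.ι F 2))
  | KF : QSmithRel F q m
      (FreeAlgebra.ι F 2 * FreeAlgebra.ι F 1)
      (algebraMap F (FreeAlgebra F (Fin 4)) ((q ^ 2)⁻¹) *
        (FreeAlgebra.ι F 1 * FreeAlgebra.ι F 2))
  | KKinv : QSmithRel F q m (FreeAlgebra.ι F 2 * FreeAlgebra.ι F 3) 1
  | KinvK : QSmithRel F q m (FreeAlgebra.ι F 3 * FreeAlgebra.ι F 2) 1
  | EF : QSmithRel F q m
      (FreeAlgebra.ι F 0 * FreeAlgebra.ι F 1 -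
        FreeAlgebra.ι F 1 * FreeAlgebra.ι F 0)
      (algebraMap F (FreeAlgebra F (Fin 4)) ((q - q⁻¹)⁻¹) *
        (FreeAlgebra.ι F (2 : Fin 4) ^ m - FreeAlgebra.ι F (3 : Fin 4) ^ m))

/-- The quantum Smith algebra. -/
abbrev QSmithAlgebra (F : Type u) [Field F] (q : F) (m : ℕ) :=
  RingQuot (QSmithRel F q m)

/-- The generator `E`. -/
noncomputable def qsE (F : Type u) [Field F] (q : F) (m : ℕ) : QSmithAlgebra F q m :=
  RingQuot.mkAlgHom F (QSmithRel F q m) (FreeAlgebra.ι F 0)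

/-- The generator `F'`. -/
noncomputable def qsF (F : Type u) [Field F] (q : F) (m : ℕ) : QSmithAlgebra F q m :=
  RingQuot.mkAlgHom F (QSmithRel F q m) (FreeAlgebra.ι F 1)

/-- The generator `K`. -/
noncomputable def qsK (F : Type u) [Field F] (q : F) (m : ℕ) : QSmithAlgebra F q m :=
  RingQuot.mkAlgHom F (QSmithRel F q m) (FreeAlgebra.ι F 2)

/-- The generator `K⁻¹`. -/
noncomputable def qsKinv (F : Type u) [Field F] (q : F) (m : ℕ) : QSmithAlgebra F q m :=
  RingQuot.mkAlgHom F (QSmithRel F q m) (FreeAlgebra.ι F 3)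

/-- The central element
`c = F'E + (q^m K^m + q^{−m} K^{−m}) / ((q^m − q^{−m})(q − q^{−1}))`. -/
noncomputable def qsC (F : Type u) [Field F] (q : F) (m : ℕ) : QSmithAlgebra F q m :=
  qsF F q m * qsE F q m +
    algebraMap F (QSmithAlgebra F q m)
        (q ^ m / ((q ^ m - (q ^ m)⁻¹) * (q - q⁻¹))) * qsK F q m ^ m +
    algebraMap F (QSmithAlgebra F q m)
        ((q ^ m)⁻¹ / ((q ^ m - (q ^ m)⁻¹) * (q - q⁻¹))) * qsKinv F q m ^ m

open LaurentPolynomial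

/-- An `F`-algebra with generators satisfying the quantum Smith relations. -/
structure QS (F : Type u) [Field F] (q : Fˣ) (m : ℕ) (A : Type*) [Ring A] [Algebra F A] where
  E : A
  Fp : A
  K : Aˣ
  hKE : (K : A) * E = ((q ^ 2 : Fˣ) : F) • (E * K)
  hKF : (K : A) * Fp = (((q ^ 2)⁻¹ : Fˣ) : F) • (Fp * K)
  hEF : E * Fp - Fp * E = ((q : F) - (q : F)⁻¹)⁻¹ •
    (((K ^ (m : ℤ) : Aˣ) : A) - ((K ^ (-(m : ℤ)) : Aˣ) : A))
  gen : ∀ P : Subalgebra F A, E ∈ P → Fp ∈ P → (K : A) ∈ P → ((K⁻¹ : Aˣ) : A) ∈ P → ∀ a, a ∈ P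

/-- scaling automorphism of Laurent polynomials -/
noncomputable def lsc {F : Type u} [Field F] (r : Fˣ) : F[T;T⁻¹] →ₐ[F] F[T;T⁻¹] :=
  AddMonoidAlgebra.lift F _ ℤ
    { toFun := fun n => ((r ^ (Multiplicative.toAdd n) : Fˣ) : F) • T (Multiplicative.toAdd n)
      map_one' := by simp
      map_mul' := by
        intro a b
        simp only [toAdd_mul, zpow_add, T_add, Units.val_mul]
        rw [smul_mul_smul_comm] }

theorem lsc_T {F : Type u} [Field F] (r : Fˣ) (n : ℤ) :
    lsc r (T n) = ((r ^ n : Fˣ) : F) • T n := by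
  unfold lsc T
  rw [AddMonoidAlgebra.lift_single, one_smul]
  rfl

theorem lp_ext {F : Type u} [Field F] {M : Type*} [AddCommGroup M] [Module F M]
    (f g : F[T;T⁻¹] →ₗ[F] M) (h : ∀ n, f (T n) = g (T n)) : f = g := by
  refine LinearMap.ext fun p => ?_
  induction p using LaurentPolynomial.induction_on' with
  | add p q hp hq => rw [map_add, map_add, hp, hq]
  | C_mul_T n a => rw [← smul_eq_C_mul, map_smul, map_smul, h]

theorem lsc_lsc {F : Type u} [Field F] (r s : Fˣ) (f : F[T;T⁻¹]) :
    lsc r (lsc s f) = lsc (r * s) f := by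
  have : (lsc r).toLinearMap ∘ₗ (lsc s).toLinearMap = (lsc (r * s)).toLinearMap := by
    apply lp_ext
    intro n
    simp [lsc_T, smul_smul, mul_zpow, mul_comm]
  exact LinearMap.congr_fun this f

theorem lsc_one {F : Type u} [Field F] (f : F[T;T⁻¹]) : lsc 1 f = f := by
  have : (lsc (1 : Fˣ)).toLinearMap = LinearMap.id := by
    apply lp_ext
    intro n
    simp [lsc_T]
  exact LinearMap.congr_fun this f

theorem lsc_inv_lsc {F : Type u} [Field F] (r : Fˣ) (f : F[T;T⁻¹]) :
    lsc r⁻¹ (lsc r f) = f := by rw [lsc_lsc, inv_mul_cancel, lsc_one]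

theorem lsc_lsc_inv {F : Type u} [Field F] (r : Fˣ) (f : F[T;T⁻¹]) :
    lsc r (lsc r⁻¹ f) = f := by rw [lsc_lsc, mul_inv_cancel, lsc_one]

/-- independence of eigenvectors -/
theorem eig_indep {F : Type u} [Field F] {M : Type*} [AddCommGroup M] [Module F M]
    (t : M →ₗ[F] M) (μ : ℤ → F) (hμ : Function.Injective μ) (s : Finset ℤ) :
    ∀ (v : ℤ → M), (∀ j ∈ s, t (v j) = μ j • v j) → ∑ j ∈ s, v j = 0 → ∀ j ∈ s, v j = 0 := by
  classical
  induction s using Finset.induction_on with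
  | empty => simp
  | insert a s ha ih =>
    intro v hv hs
    rw [Finset.sum_insert ha] at hs
    have h1 : ∑ j ∈ s, (μ j - μ a) • v j = 0 := by
      have h2 : t (v a + ∑ j ∈ s, v j) - μ a • (v a + ∑ j ∈ s, v j) = 0 := by rw [hs]; simp
      rw [map_add, map_sum, hv a (by simp), smul_add, Finset.smul_sum, add_sub_add_left_eq_sub,
        ← Finset.sum_sub_distrib] at h2
      rw [← h2]
      apply Finset.sum_congr rfl
      intro j hj
      rw [hv j (by simp [hj]), sub_smul]
    have h3 := ih (fun j => (μ j - μ a) • v j)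
      (by intro j hj; rw [map_smul, hv j (by simp [hj]), smul_comm]) h1
    have h4 : ∀ j ∈ s, v j = 0 := by
      intro j hj
      refine (smul_eq_zero.mp (h3 j hj)).resolve_left ?_
      intro h
      exact ha (hμ (sub_eq_zero.mp h) ▸ hj)
    rw [Finset.sum_eq_zero h4, add_zero] at hs
    intro j hj
    rcases Finset.mem_insert.mp hj with rfl | hj
    · exact hs
    · exact h4 j hj

namespace QS

section
variable {F : Type u} [Field F] {q : Fˣ} {m : ℕ} {A : Type*} [Ring A] [Algebra F A]
  (S : QS F q m A)

/-- evaluation of Laurent polynomials at `K` -/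
noncomputable def L : F[T;T⁻¹] →ₐ[F] A :=
  AddMonoidAlgebra.lift F _ ℤ ((Units.coeHom A).comp (zpowersHom Aˣ S.K))

theorem L_T (n : ℤ) : S.L (T n) = ((S.K ^ n : Aˣ) : A) := by
  unfold L T
  rw [AddMonoidAlgebra.lift_single, one_smul]
  rfl

theorem zpow_comm (X : A) (r : Fˣ) (h : (S.K : A) * X = (r : F) • (X * S.K)) (n : ℤ) :
    ((S.K ^ n : Aˣ) : A) * X = ((r ^ n : Fˣ) : F) • (X * ((S.K ^ n : Aˣ) : A)) := by
  have hinv : ((S.K⁻¹ : Aˣ) : A) * X = ((r⁻¹ : Fˣ) : F) • (X * ((S.K⁻¹ : Aˣ) : A)) := by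
    have : X = ((r⁻¹ : Fˣ) : F) • ((S.K : A) * X * ((S.K⁻¹ : Aˣ) : A)) := by
      rw [h, smul_mul_assoc, smul_smul, mul_assoc]; simp
    conv_lhs => rw [this]
    rw [mul_smul_comm, ← mul_assoc, ← mul_assoc]; simp
  induction n using Int.induction_on with
  | zero => simp
  | succ i ih =>
    rw [zpow_add, zpow_add, zpow_one, zpow_one, Units.val_mul, mul_assoc, h, mul_smul_comm,
      ← mul_assoc, ih, smul_mul_assoc, smul_smul, Units.val_mul, mul_assoc, mul_comm (r : F)]
  | pred i ih =>
    rw [zpow_sub, zpow_sub, zpow_one, zpow_one, Units.val_mul, mul_assoc, hinv, mul_smul_comm,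
      ← mul_assoc, ih, smul_mul_assoc, smul_smul, Units.val_mul, mul_assoc, mul_comm ((r⁻¹ : Fˣ) : F)]

theorem L_comm (X : A) (r : Fˣ) (h : (S.K : A) * X = (r : F) • (X * S.K)) (f : F[T;T⁻¹]) :
    S.L f * X = X * S.L (lsc r f) := by
  have : (LinearMap.mulRight F X) ∘ₗ S.L.toLinearMap =
      (LinearMap.mulLeft F X) ∘ₗ S.L.toLinearMap ∘ₗ (lsc r).toLinearMap := by
    apply lp_ext
    intro n
    simp [lsc_T, L_T, S.zpow_comm X r h]
  exact LinearMap.congr_fun this f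

theorem L_E (f : F[T;T⁻¹]) : S.L f * S.E = S.E * S.L (lsc (q ^ 2) f) := S.L_comm _ _ S.hKE f
theorem L_F (f : F[T;T⁻¹]) : S.L f * S.Fp = S.Fp * S.L (lsc (q ^ 2)⁻¹ f) := S.L_comm _ _ S.hKF f
theorem E_L (f : F[T;T⁻¹]) : S.E * S.L f = S.L (lsc (q ^ 2)⁻¹ f) * S.E := by
  rw [L_E, lsc_lsc_inv]
theorem F_L (f : F[T;T⁻¹]) : S.Fp * S.L f = S.L (lsc (q ^ 2) f) * S.Fp := by
  rw [L_F, lsc_inv_lsc]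

/-- The Laurent polynomial part of the Casimir -/
noncomputable def rho (q : Fˣ) (m : ℕ) : F[T;T⁻¹] :=
  ((q : F) ^ m / (((q : F) ^ m - ((q : F) ^ m)⁻¹) * ((q : F) - (q : F)⁻¹))) • T (m : ℤ) +
  (((q : F) ^ m)⁻¹ / (((q : F) ^ m - ((q : F) ^ m)⁻¹) * ((q : F) - (q : F)⁻¹))) • T (-(m : ℤ))

/-- Casimir -/
noncomputable def c : A := S.Fp * S.E + S.L (rho q m)

theorem rho_sub (h1 : (q : F) ^ m - ((q : F) ^ m)⁻¹ ≠ 0) (h2 : (q : F) - (q : F)⁻¹ ≠ 0) :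
    rho q m - lsc (q ^ 2)⁻¹ (rho q m) = ((q : F) - (q : F)⁻¹)⁻¹ • (T (m : ℤ) - T (-(m : ℤ))) := by
  have hq : (q : F) ≠ 0 := q.ne_zero
  have hqm : (q : F) ^ m ≠ 0 := pow_ne_zero _ hq
  have e1 : (((q ^ 2)⁻¹ ^ (m : ℤ) : Fˣ) : F) = (((q : F) ^ m)⁻¹) ^ 2 := by
    simp [← pow_mul, mul_comm]
  have e2 : (((q ^ 2)⁻¹ ^ (-(m : ℤ)) : Fˣ) : F) = ((q : F) ^ m) ^ 2 := by
    simp [← pow_mul, mul_comm]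
  unfold rho
  simp only [map_add, map_smul, lsc_T, e1, e2, smul_sub]
  generalize (q : F) ^ m = x at *
  generalize (q : F) - (q : F)⁻¹ = y at *
  have a1 : x / ((x - x⁻¹) * y) - x / ((x - x⁻¹) * y) * (x⁻¹) ^ 2 = y⁻¹ := by
    have : x / ((x - x⁻¹) * y) - x / ((x - x⁻¹) * y) * (x⁻¹) ^ 2 = (x - x⁻¹) * (x - x⁻¹)⁻¹ * y⁻¹ := by
      field_simp
    rw [this, mul_inv_cancel₀ h1, one_mul]
  have a2 : x⁻¹ / ((x - x⁻¹) * y) - x⁻¹ / ((x - x⁻¹) * y) * x ^ 2 = -y⁻¹ := by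
    have : x⁻¹ / ((x - x⁻¹) * y) - x⁻¹ / ((x - x⁻¹) * y) * x ^ 2 = -((x - x⁻¹) * (x - x⁻¹)⁻¹ * y⁻¹) := by
      field_simp
      ring
    rw [this, mul_inv_cancel₀ h1, one_mul]
  rw [smul_smul, smul_smul, add_sub_add_comm, ← sub_smul, ← sub_smul, a1, a2, neg_smul,
    sub_eq_add_neg]

theorem c_eq (h1 : (q : F) ^ m - ((q : F) ^ m)⁻¹ ≠ 0) (h2 : (q : F) - (q : F)⁻¹ ≠ 0) :
    S.c = S.E * S.Fp + S.L (lsc (q ^ 2)⁻¹ (rho q m)) := by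
  have h := S.hEF
  rw [← L_T, ← L_T, ← map_sub, ← map_smul, ← rho_sub h1 h2, map_sub] at h
  unfold c
  rw [← sub_eq_zero] at h ⊢
  rw [← neg_eq_zero, ← h]
  abel

theorem c_E (h1 : (q : F) ^ m - ((q : F) ^ m)⁻¹ ≠ 0) (h2 : (q : F) - (q : F)⁻¹ ≠ 0) :
    S.c * S.E = S.E * S.c := by
  conv_lhs => rw [S.c_eq h1 h2]
  rw [c, add_mul, mul_add, E_L, mul_assoc]

theorem c_F (h1 : (q : F) ^ m - ((q : F) ^ m)⁻¹ ≠ 0) (h2 : (q : F) - (q : F)⁻¹ ≠ 0) :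
    S.c * S.Fp = S.Fp * S.c := by
  conv_rhs => rw [S.c_eq h1 h2]
  rw [c, add_mul, mul_add, L_F, mul_assoc]

theorem c_L (f : F[T;T⁻¹]) : S.c * S.L f = S.L f * S.c := by
  rw [c, add_mul, mul_add, mul_assoc, E_L, ← mul_assoc, F_L, lsc_lsc_inv, ← map_mul, ← map_mul,
    mul_comm f, mul_assoc]

theorem c_comm (h1 : (q : F) ^ m - ((q : F) ^ m)⁻¹ ≠ 0) (h2 : (q : F) - (q : F)⁻¹ ≠ 0) (a : A) :
    S.c * a = a * S.c := by
  have := S.gen (Subalgebra.centralizer F {S.c})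
  simp only [Subalgebra.mem_centralizer_iff, Set.mem_singleton_iff, forall_eq] at this
  apply this (S.c_E h1 h2) (S.c_F h1 h2)
  · have := S.c_L (T 1)
    rwa [L_T, zpow_one] at this
  · have := S.c_L (T (-1))
    rwa [L_T, zpow_neg_one] at this

theorem closed {M : Type*} [AddCommGroup M] [Module F M] [Module A M] [IsScalarTower F A M]
    (N : Submodule F M) (hE : ∀ x ∈ N, S.E • x ∈ N) (hF : ∀ x ∈ N, S.Fp • x ∈ N)
    (hK : ∀ n : ℤ, ∀ x ∈ N, S.L (T n) • x ∈ N) (a : A) : ∀ x ∈ N, a • x ∈ N := by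
  let P : Subalgebra F A :=
    { carrier := {a | ∀ x ∈ N, a • x ∈ N}
      mul_mem' := by
        intro a b ha hb x hx
        rw [mul_smul]
        exact ha _ (hb _ hx)
      add_mem' := by
        intro a b ha hb x hx
        rw [add_smul]
        exact N.add_mem (ha _ hx) (hb _ hx)
      algebraMap_mem' := by
        intro r x hx
        rw [algebraMap_smul]
        exact N.smul_mem _ hx }
  refine S.gen P hE hF ?_ ?_ a
  · have := hK 1
    rwa [L_T, zpow_one] at this
  · have := hK (-1)
    rwa [L_T, zpow_neg_one] at this

end
end QS

namespace QS

section
variable {F : Type u} [Field F] {q : Fˣ} {m : ℕ} {A : Type*} [Ring A] [Algebra F A]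
  (S : QS F q m A) {V : Type*} [AddCommGroup V] [Module F V] [Module A V] [IsScalarTower F A V]

theorem mu_inj (hq : ∀ k : ℕ, 1 ≤ k → ((q : F) ^ 2) ^ k ≠ 1) :
    Function.Injective (fun j : ℤ => (((q ^ 2) ^ j : Fˣ) : F)) := by
  have h0 : Function.Injective (fun j : ℤ => ((q ^ 2) ^ j : Fˣ)) := by
    rw [injective_zpow_iff_not_isOfFinOrder, isOfFinOrder_iff_pow_eq_one]
    rintro ⟨n, hn, h⟩
    apply hq n hn
    rw [← Units.val_pow_eq_pow_val, ← Units.val_pow_eq_pow_val, h, Units.val_one]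
  intro a b h
  exact h0 (Units.ext h)

theorem mu_inj' (hq : ∀ k : ℕ, 1 ≤ k → ((q : F) ^ 2) ^ k ≠ 1) {ζ : F} (hζ : ζ ≠ 0) :
    Function.Injective (fun j : ℤ => (((q ^ 2)⁻¹ ^ j : Fˣ) : F) * ζ) := by
  intro a b h
  have h1 := mul_right_cancel₀ hζ h
  rw [inv_zpow', inv_zpow'] at h1
  exact neg_injective (mu_inj hq h1)

theorem smul_comm_F (a : A) (r : F) (v : V) : a • r • v = r • a • v := by
  rw [← algebraMap_smul A r v, ← algebraMap_smul A r (a • v), smul_smul, smul_smul,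
    Algebra.commutes]

theorem E_LT {ζ : F} {u : V} (hu : S.E • u = ζ • u) (j : ℤ) :
    S.E • S.L (T j) • u = ((((q ^ 2)⁻¹ ^ j : Fˣ) : F) * ζ) • S.L (T j) • u := by
  rw [smul_smul, E_L, mul_smul, hu, lsc_T, map_smul, smul_assoc, smul_comm_F, smul_smul]

theorem exists_eig [IsAlgClosed F] (c : A) (n : ℕ) : ∀ (p : Polynomial F) (u : V),
    p.natDegree = n → p ≠ 0 → u ≠ 0 → Polynomial.aeval c p • u = 0 →
    ∃ ϑ : F, ∃ u' : V, u' ≠ 0 ∧ c • u' = ϑ • u' := by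
  induction n with
  | zero =>
    intro p u hn hp hu h
    rw [Polynomial.eq_C_of_natDegree_eq_zero hn, Polynomial.aeval_C, algebraMap_smul] at h
    rcases smul_eq_zero.mp h with h | h
    · exact absurd (by rw [Polynomial.eq_C_of_natDegree_eq_zero hn, h, map_zero]) hp
    · exact absurd h hu
  | succ n ih =>
    intro p u hn hp hu h
    obtain ⟨x, hx⟩ := IsAlgClosed.exists_root p (by
      intro h0
      have h00 : p.natDegree = 0 := Polynomial.natDegree_eq_of_degree_eq_some h0
      omega)
    obtain ⟨p', rfl⟩ := Polynomial.dvd_iff_isRoot.mpr hx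
    have hp' : p' ≠ 0 := right_ne_zero_of_mul hp
    rw [Polynomial.natDegree_mul (Polynomial.X_sub_C_ne_zero x) hp', Polynomial.natDegree_X_sub_C] at hn
    by_cases h0 : Polynomial.aeval c p' • u = 0
    · exact ih p' u (by omega) hp' hu h0
    · refine ⟨x, _, h0, ?_⟩
      rw [map_mul, mul_smul, map_sub, Polynomial.aeval_X, Polynomial.aeval_C, sub_smul, sub_eq_zero,
        algebraMap_smul] at h
      exact h

theorem aeval_comm (c a : A) (h : c * a = a * c) (p : Polynomial F) :
    Polynomial.aeval c p * a = a * Polynomial.aeval c p := by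
  have : Polynomial.aeval c p ∈ Subalgebra.centralizer F {a} := by
    have h1 : Algebra.adjoin F {c} ≤ Subalgebra.centralizer F {a} := by
      rw [Algebra.adjoin_le_iff]
      intro x hx
      rw [Set.mem_singleton_iff] at hx
      subst hx
      exact (Subalgebra.mem_centralizer_iff F).mpr (by simp [h])
    exact h1 (Polynomial.aeval_mem_adjoin_singleton F c)
  simpa [Subalgebra.mem_centralizer_iff] using (this a rfl).symm

theorem Fw {ζ : F} (hζ : ζ ≠ 0) {w : V} (hE : S.E • w = ζ • w) :
    S.Fp • w = ζ⁻¹ • (S.c - S.L (rho q m)) • w := by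
  have : S.c - S.L (rho q m) = S.Fp * S.E := by rw [c]; abel
  rw [this, mul_smul, hE, smul_comm_F, smul_smul, inv_mul_cancel₀ hζ, one_smul]

theorem exists_theta [IsAlgClosed F] [IsSimpleModule A V]
    (hq : ∀ k : ℕ, 1 ≤ k → ((q : F) ^ 2) ^ k ≠ 1)
    (h1 : (q : F) ^ m - ((q : F) ^ m)⁻¹ ≠ 0) (h2 : (q : F) - (q : F)⁻¹ ≠ 0)
    {ζ : F} (hζ : ζ ≠ 0) (w : V) (hw : w ≠ 0) (hE : S.E • w = ζ • w) :
    ∃ ϑ : F, ∀ v : V, S.c • v = ϑ • v := by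
  classical
  have hcc := S.c_comm h1 h2
  suffices h : ∃ ϑ : F, ∃ u' : V, u' ≠ 0 ∧ S.c • u' = ϑ • u' by
    obtain ⟨ϑ, u, hu, hcu⟩ := h
    refine ⟨ϑ, fun v => ?_⟩
    obtain ⟨a, rfl⟩ := IsSimpleModule.toSpanSingleton_surjective A hu v
    rw [LinearMap.toSpanSingleton_apply, smul_smul, hcc, mul_smul, hcu, smul_comm_F]
  by_cases hcw : S.c • w = 0
  · exact ⟨0, w, hw, by rw [hcw, zero_smul]⟩
  let G : ℤ → Polynomial F →ₗ[F] V := fun j =>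
    (Algebra.lsmul F F V (S.L (T j))) ∘ₗ ((LinearMap.toSpanSingleton A V w).restrictScalars F) ∘ₗ
      (Polynomial.aeval S.c).toLinearMap
  have hG : ∀ j p, G j p = S.L (T j) • Polynomial.aeval S.c p • w := fun j p => rfl
  let Φ : (ℤ →₀ Polynomial F) →ₗ[F] V := Finsupp.lsum F G
  have hΦs : ∀ j p, Φ (Finsupp.single j p) = G j p := fun j p => Finsupp.lsum_single _ _ _ _
  have hΦ : ∀ f, Φ f = f.sum fun j p => G j p := fun f => rfl
  have hEG : ∀ j p, S.E • G j p = ((((q ^ 2)⁻¹ ^ j : Fˣ) : F) * ζ) • G j p := by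
    intro j p
    rw [hG]
    apply E_LT
    rw [smul_smul, ← aeval_comm _ _ (hcc S.E), mul_smul, hE, smul_comm_F]
  have hTG : ∀ n j p, S.L (T n) • G j p = G (n + j) p := by
    intro n j p
    rw [hG, hG, smul_smul, ← map_mul, ← T_add]
  have hcG : ∀ j p, S.c • G j p = G j (Polynomial.X * p) := by
    intro j p
    rw [hG, hG, smul_smul, hcc, mul_smul, smul_smul S.c, map_mul, Polynomial.aeval_X]
  have hmem : ∀ j p, G j p ∈ LinearMap.range Φ := fun j p => ⟨_, hΦs j p⟩
  have hclosed := S.closed (LinearMap.range Φ) (by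
      rintro _ ⟨f, rfl⟩
      induction f using Finsupp.induction_linear with
      | zero => simp
      | add f g hf hg => rw [map_add, smul_add]; exact Submodule.add_mem _ hf hg
      | single j p =>
        rw [hΦs, hEG]
        exact Submodule.smul_mem _ _ (hmem _ _)) (by
      rintro _ ⟨f, rfl⟩
      induction f using Finsupp.induction_linear with
      | zero => simp
      | add f g hf hg => rw [map_add, smul_add]; exact Submodule.add_mem _ hf hg
      | single j p =>
        have e : S.Fp • Φ (Finsupp.single j p) = (((q ^ 2) ^ j : Fˣ) : F) • ζ⁻¹ •
            (S.c • G j p - S.L (rho q m) • G j p) := by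
          rw [hΦs, hG, smul_smul, F_L, mul_smul, smul_smul S.Fp, ← aeval_comm _ _ (hcc S.Fp),
            mul_smul, S.Fw hζ hE, lsc_T, map_smul, smul_assoc, smul_comm_F, smul_comm_F]
          congr 2
          rw [← sub_smul, smul_smul, smul_smul, smul_smul, smul_smul]
          congr 1
          have k1 : Polynomial.aeval S.c p * (S.c - S.L (rho q m)) =
              (S.c - S.L (rho q m)) * Polynomial.aeval S.c p := 
            aeval_comm _ _ (hcc _) p
          have k2 : S.L (T j) * (S.c - S.L (rho q m)) = (S.c - S.L (rho q m)) * S.L (T j) := by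
            rw [mul_sub, sub_mul, c_L, ← map_mul, ← map_mul, mul_comm (T j)]
          rw [mul_assoc, k1, ← mul_assoc, k2, mul_assoc]
        rw [e]
        refine Submodule.smul_mem _ _ (Submodule.smul_mem _ _ (Submodule.sub_mem _ ?_ ?_))
        · rw [hcG]; exact hmem _ _
        · rw [rho, map_add, map_smul, map_smul, add_smul, smul_assoc, smul_assoc, hTG, hTG]
          exact Submodule.add_mem _ (Submodule.smul_mem _ _ (hmem _ _))
            (Submodule.smul_mem _ _ (hmem _ _))) (by
      rintro n _ ⟨f, rfl⟩
      induction f using Finsupp.induction_linear with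
      | zero => simp
      | add f g hf hg => rw [map_add, smul_add]; exact Submodule.add_mem _ hf hg
      | single j p =>
        rw [hΦs, hTG]
        exact hmem _ _)
  have hw0 : w = G 0 1 := by rw [hG]; simp
  obtain ⟨a, ha⟩ := IsSimpleModule.toSpanSingleton_surjective A hcw w
  rw [LinearMap.toSpanSingleton_apply] at ha
  obtain ⟨f, hf⟩ := hclosed a w (by rw [hw0]; exact hmem _ _)
  rw [smul_smul, ← hcc, mul_smul, ← hf, hΦ,
    Finsupp.sum_of_support_subset f (Finset.subset_insert 0 f.support) _ (by simp), Finset.smul_sum] at ha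
  have key := eig_indep (Algebra.lsmul F F V S.E) _ (mu_inj' hq hζ) (insert 0 f.support)
    (fun j => G j (Polynomial.X * f j - if j = 0 then 1 else 0))
    (fun j _ => hEG j _) (by
      simp only [map_sub, Finset.sum_sub_distrib]
      rw [sub_eq_zero]
      simp only [hcG] at ha
      rw [ha, Finset.sum_eq_single 0]
      · simpa using hw0
      · intro b _ hb
        simp [hb]
      · intro h
        simp at h) 0 (by simp)
  simp only [if_true] at key
  rw [hG, T_zero, map_one, one_smul] at key
  refine exists_eig S.c _ _ w rfl ?_ hw key
  intro h
  have := congrArg (Polynomial.eval 0) h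
  simp at this

theorem Lw_inj (hq : ∀ k : ℕ, 1 ≤ k → ((q : F) ^ 2) ^ k ≠ 1)
    {ζ : F} (hζ : ζ ≠ 0) (w : V) (hw : w ≠ 0) (hE : S.E • w = ζ • w)
    (f : F[T;T⁻¹]) (hf : S.L f • w = 0) : f = 0 := by
  have hs : f = ∑ j ∈ f.coeff.support, f.coeff j • T j := by
    conv_lhs => rw [← AddMonoidAlgebra.sum_coeff_single f]
    rw [Finsupp.sum]
    apply Finset.sum_congr rfl
    intro j _
    rw [single_eq_C_mul_T, smul_eq_C_mul]
  rw [hs, map_sum, Finset.sum_smul] at hf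
  have key := eig_indep (Algebra.lsmul F F V S.E) _ (mu_inj' hq hζ) f.coeff.support
    (fun j => S.L (f.coeff j • T j) • w) (by
      intro j _
      simp only [map_smul, smul_assoc, Algebra.lsmul_apply]
      rw [smul_comm_F, S.E_LT hE, smul_comm]) hf
  rw [hs]
  apply Finset.sum_eq_zero
  intro j hj
  have h := key j hj
  simp only [map_smul, smul_assoc] at h
  rcases smul_eq_zero.mp h with h | h
  · rw [h, zero_smul]
  · exfalso
    apply hw
    have : S.L (T (-j)) • S.L (T j) • w = 0 := by rw [h, smul_zero]
    rwa [smul_smul, ← map_mul, ← T_add, neg_add_cancel, T_zero, map_one, one_smul] at this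

theorem E_Lw {ζ : F} (w : V) (hE : S.E • w = ζ • w) (f : F[T;T⁻¹]) :
    S.E • S.L f • w = S.L (ζ • lsc (q ^ 2)⁻¹ f) • w := by
  rw [smul_smul, E_L, mul_smul, hE, map_smul, smul_comm_F, smul_assoc]

theorem F_Lw {ζ : F} (hζ : ζ ≠ 0) (w : V) (hE : S.E • w = ζ • w) {ϑ : F}
    (hϑ : ∀ v : V, S.c • v = ϑ • v) (f : F[T;T⁻¹]) :
    S.Fp • S.L f • w = S.L (ζ⁻¹ • (lsc (q ^ 2) f * (algebraMap F _ ϑ - rho q m))) • w := by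
  rw [smul_smul, F_L, mul_smul, S.Fw hζ hE, sub_smul, hϑ, map_smul, smul_assoc, smul_comm_F,
    map_mul, mul_smul, map_sub, sub_smul, AlgHom.commutes, algebraMap_smul]

theorem Lw_surj [IsSimpleModule A V] {ζ : F} (hζ : ζ ≠ 0) (w : V) (hw : w ≠ 0)
    (hE : S.E • w = ζ • w) {ϑ : F}
    (hϑ : ∀ v : V, S.c • v = ϑ • v) (v : V) : ∃ f, v = S.L f • w := by
  let Φ : F[T;T⁻¹] →ₗ[F] V :=
    ((LinearMap.toSpanSingleton A V w).restrictScalars F) ∘ₗ S.L.toLinearMap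
  have hΦ : ∀ f, Φ f = S.L f • w := fun f => rfl
  obtain ⟨a, rfl⟩ := IsSimpleModule.toSpanSingleton_surjective A hw v
  obtain ⟨f, hf⟩ := S.closed (LinearMap.range Φ) (by
    rintro _ ⟨f, rfl⟩
    rw [hΦ, S.E_Lw w hE]
    exact ⟨_, rfl⟩) (by
    rintro _ ⟨f, rfl⟩
    rw [hΦ, S.F_Lw hζ w hE hϑ]
    exact ⟨_, rfl⟩) (by
    rintro n _ ⟨f, rfl⟩
    rw [hΦ, smul_smul, ← map_mul]
    exact ⟨_, rfl⟩) a w ⟨1, by rw [hΦ, map_one, one_smul]⟩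
  exact ⟨f, hf.symm⟩

/-- weight vectors -/
noncomputable def D (k : ℤ) : A := S.E ^ k.toNat * S.Fp ^ (-k).toNat

theorem E_D (k : ℕ) : S.E * S.D k = S.D (k + 1) := by
  have h1 : ((k : ℤ) + 1).toNat = k + 1 := by omega
  have h2 : (-((k : ℤ) + 1)).toNat = 0 := by omega
  have h3 : (-1 + -(k : ℤ)).toNat = 0 := by omega
  simp [D, h1, h3, pow_succ']

theorem F_D (k : ℕ) : S.Fp * S.D (-k) = S.D (-(k + 1)) := by
  have h1 : ((k : ℤ) + 1).toNat = k + 1 := by omega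
  have h2 : (-((k : ℤ) + 1)).toNat = 0 := by omega
  have h3 : (-1 + -(k : ℤ)).toNat = 0 := by omega
  simp [D, h1, h3, pow_succ']

theorem K_D (k : ℤ) : (S.K : A) * S.D k = (((q ^ 2) ^ k : Fˣ) : F) • (S.D k * S.K) := by
  have hE : ∀ n : ℕ, (S.K : A) * S.D n = (((q ^ 2) ^ (n : ℤ) : Fˣ) : F) • (S.D n * S.K) := by
    intro n
    induction n with
    | zero => simp [D]
    | succ n ih =>
      rw [Nat.cast_succ, ← E_D, ← mul_assoc, S.hKE, smul_mul_assoc, mul_assoc, ih, mul_smul_comm,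
        smul_smul, zpow_add, zpow_one, mul_comm ((q ^ 2) ^ (n : ℤ)), Units.val_mul, mul_assoc]
  have hF : ∀ n : ℕ, (S.K : A) * S.D (-n) = (((q ^ 2) ^ (-n : ℤ) : Fˣ) : F) • (S.D (-n) * S.K) := by
    intro n
    induction n with
    | zero => simp [D]
    | succ n ih =>
      rw [Nat.cast_succ, ← F_D, ← mul_assoc, S.hKF, smul_mul_assoc, mul_assoc, ih, mul_smul_comm,
        smul_smul, neg_add, zpow_add, zpow_neg_one, mul_comm ((q ^ 2) ^ (-n : ℤ)), Units.val_mul, mul_assoc]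
  rcases Int.eq_nat_or_neg k with ⟨n, rfl | rfl⟩
  · exact hE n
  · exact hF n

theorem L_D (k : ℤ) (f : F[T;T⁻¹]) : S.L f * S.D k = S.D k * S.L (lsc ((q ^ 2) ^ k) f) :=
  S.L_comm _ _ (S.K_D k) f

/-- sums of weight vectors -/
noncomputable def Th : (ℤ →₀ F[T;T⁻¹]) →ₗ[F] A :=
  Finsupp.lsum F (fun k => LinearMap.mulLeft F (S.D k) ∘ₗ S.L.toLinearMap)

theorem Th_single (k : ℤ) (g : F[T;T⁻¹]) : S.Th (Finsupp.single k g) = S.D k * S.L g :=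
  Finsupp.lsum_single _ _ _ _

theorem Th_apply (f) : S.Th f = f.sum fun k g => S.D k * S.L g := rfl

theorem decomp (h1 : (q : F) ^ m - ((q : F) ^ m)⁻¹ ≠ 0) (h2 : (q : F) - (q : F)⁻¹ ≠ 0)
    (ϑ : F) (a : A) :
    ∃ f, ∃ j ∈ Ideal.span {S.c - algebraMap F A ϑ}, a = S.Th f + j := by
  have hcc := S.c_comm h1 h2
  set J := Ideal.span {S.c - algebraMap F A ϑ} with hJ
  let N : Submodule F A := LinearMap.range S.Th ⊔ J.restrictScalars F
  have hDL : ∀ k g, S.D k * S.L g ∈ N := fun k g =>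
    Submodule.mem_sup_left ⟨_, S.Th_single k g⟩
  have hJN : ∀ x ∈ J, x ∈ N := fun x hx => Submodule.mem_sup_right hx
  have hc : ∀ x, S.c * x - ϑ • x ∈ N := by
    intro x
    apply hJN
    rw [hJ, Ideal.mem_span_singleton']
    refine ⟨x, ?_⟩
    rw [mul_sub, hcc, Algebra.smul_def, Algebra.commutes]
  have hred : ∀ X : A, (∀ k g, X * (S.D k * S.L g) ∈ N) → ∀ x ∈ N, X • x ∈ N := by
    intro X hX x hx
    obtain ⟨y, ⟨f, rfl⟩, z, hz, rfl⟩ := Submodule.mem_sup.mp hx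
    rw [smul_add]
    refine N.add_mem ?_ (hJN _ (J.smul_mem X hz))
    clear hx
    induction f using Finsupp.induction_linear with
    | zero => simp
    | add f g hf hg => rw [map_add, smul_add]; exact N.add_mem hf hg
    | single k g => rw [Th_single]; exact hX k g
  have hLD : ∀ f k g, S.L f * (S.D k * S.L g) ∈ N := by
    intro f k g
    rw [← mul_assoc, L_D, mul_assoc, ← map_mul]
    exact hDL _ _
  have hcx : ∀ ρ k g, (S.c - S.L ρ) * (S.D k * S.L g) ∈ N := by
    intro ρ k g
    have : (S.c - S.L ρ) * (S.D k * S.L g) = (S.c * (S.D k * S.L g) - ϑ • (S.D k * S.L g)) +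
        ϑ • (S.D k * S.L g) - S.L ρ * (S.D k * S.L g) := by rw [sub_mul]; abel
    rw [this]
    exact N.sub_mem (N.add_mem (hc _) (N.smul_mem _ (hDL _ _))) (hLD _ _ _)
  have hEF : S.E * S.Fp = S.c - S.L (lsc (q ^ 2)⁻¹ (rho q m)) := by rw [S.c_eq h1 h2]; abel
  have hFE : S.Fp * S.E = S.c - S.L (rho q m) := by rw [c]; abel
  have hall := S.closed N (hred _ (by
    intro k g
    rw [← mul_assoc]
    rcases Int.eq_nat_or_neg k with ⟨n, rfl | rfl⟩
    · rw [E_D]; exact hDL _ _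
    · cases n with
      | zero =>
        have := S.E_D 0
        simp only [Nat.cast_zero, neg_zero] at this ⊢
        rw [this]; exact hDL _ _
      | succ n =>
        rw [Nat.cast_succ, ← F_D, ← mul_assoc, hEF, mul_assoc]; exact hcx _ _ _)) (hred _ (by
    intro k g
    rw [← mul_assoc]
    rcases Int.eq_nat_or_neg k with ⟨n, rfl | rfl⟩
    · cases n with
      | zero =>
        have := S.F_D 0
        simp only [Nat.cast_zero, neg_zero] at this ⊢
        rw [this]; exact hDL _ _
      | succ n =>
        rw [Nat.cast_succ, ← E_D, ← mul_assoc, hFE, mul_assoc]; exact hcx _ _ _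
    · rw [F_D]; exact hDL _ _)) (fun n => hred _ (hLD _)) a 1 (by
      have := hDL 0 1
      simpa [D] using this)
  rw [smul_eq_mul, mul_one] at hall
  obtain ⟨y, ⟨f, rfl⟩, z, hz, h⟩ := Submodule.mem_sup.mp hall
  exact ⟨f, z, hz, h.symm⟩

theorem main [IsAlgClosed F] [IsSimpleModule A V] (hm : 1 ≤ m)
    (hq : ∀ k : ℕ, 1 ≤ k → ((q : F) ^ 2) ^ k ≠ 1)
    (h1 : (q : F) ^ m - ((q : F) ^ m)⁻¹ ≠ 0) (h2 : (q : F) - (q : F)⁻¹ ≠ 0)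
    {ζ : F} (hζ : ζ ≠ 0) (w : V) (hw : w ≠ 0) (hE : S.E • w = ζ • w) :
    ∃ ϑ : F, {a : A | ∀ v : V, a • v = 0} = ↑(Ideal.span {S.c - algebraMap F A ϑ}) := by
  obtain ⟨ϑ, hϑ⟩ := S.exists_theta hq h1 h2 hζ w hw hE
  have hinj := S.Lw_inj hq hζ w hw hE
  have hsurj := S.Lw_surj hζ w hw hE hϑ
  have hrho : algebraMap F F[T;T⁻¹] ϑ - rho q m ≠ 0 := by
    intro h
    have := congrArg (fun f : F[T;T⁻¹] => f.coeff m) h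
    have hm0 : (m : ℤ) ≠ 0 := by omega
    have hm1 : -(m : ℤ) ≠ m := by omega
    have hm2 : m ≠ 0 := by omega
    simp only [rho, ← C_eq_algebraMap] at this
    simp [hm1, hm2] at this
    tauto
  have hlsc : ∀ (r : Fˣ) (f : F[T;T⁻¹]), lsc r f = 0 → f = 0 := by
    intro r f h
    rw [← lsc_inv_lsc r f, h, map_zero]
  have injE : ∀ v : V, S.E • v = 0 → v = 0 := by
    intro v hv
    obtain ⟨f, rfl⟩ := hsurj v
    rw [S.E_Lw w hE] at hv
    rw [hlsc _ f ((smul_eq_zero.mp (hinj _ hv)).resolve_left hζ), map_zero, zero_smul]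
  have injF : ∀ v : V, S.Fp • v = 0 → v = 0 := by
    intro v hv
    obtain ⟨f, rfl⟩ := hsurj v
    rw [S.F_Lw hζ w hE hϑ] at hv
    have h3 := (smul_eq_zero.mp (hinj _ hv)).resolve_left (inv_ne_zero hζ)
    rw [hlsc _ f ((mul_eq_zero.mp h3).resolve_right hrho), map_zero, zero_smul]
  have injpow : ∀ (X : A), (∀ v : V, X • v = 0 → v = 0) → ∀ n : ℕ, ∀ v : V, X ^ n • v = 0 → v = 0 := by
    intro X hX n
    induction n with
    | zero => intro v hv; simpa using hv
    | succ n ih =>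
      intro v hv
      rw [pow_succ, mul_smul] at hv
      exact hX _ (ih _ hv)
  have injD : ∀ k, ∀ v : V, S.D k • v = 0 → v = 0 := by
    intro k v hv
    rw [D, mul_smul] at hv
    exact injpow _ injF _ _ (injpow _ injE _ _ hv)
  have hJ : ∀ j ∈ Ideal.span {S.c - algebraMap F A ϑ}, ∀ v : V, j • v = 0 := by
    intro j hj v
    obtain ⟨b, rfl⟩ := Ideal.mem_span_singleton'.mp hj
    rw [mul_smul, sub_smul, hϑ, algebraMap_smul, sub_self, smul_zero]
  refine ⟨ϑ, Set.Subset.antisymm ?_ hJ⟩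
  intro a ha
  obtain ⟨f, j, hj, rfl⟩ := S.decomp h1 h2 ϑ a
  have hf : ∀ v : V, S.Th f • v = 0 := by
    intro v
    have := ha v
    rwa [add_smul, hJ j hj, add_zero] at this
  let φ := Algebra.lsmul F F V (A := A)
  have hφ : φ (S.Th f) = 0 := LinearMap.ext hf
  rw [Th_apply, Finsupp.sum, map_sum] at hφ
  have key := eig_indep
    (LinearMap.mulLeft F (φ (S.K : A)) ∘ₗ LinearMap.mulRight F (φ ((S.K⁻¹ : Aˣ) : A)))
    _ (mu_inj hq) f.support (fun k => φ (S.D k * S.L (f k))) (by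
      intro k _
      simp only [LinearMap.comp_apply, LinearMap.mulRight_apply, LinearMap.mulLeft_apply]
      rw [← map_mul, ← map_mul, ← map_smul]
      congr 1
      have hK : (S.K : A) = S.L (T 1) := by rw [L_T, zpow_one]
      have e : S.L (f k) * ((S.K⁻¹ : Aˣ) : A) = ((S.K⁻¹ : Aˣ) : A) * S.L (f k) := by
        have : ((S.K⁻¹ : Aˣ) : A) = S.L (T (-1)) := by rw [L_T, zpow_neg_one]
        rw [this, ← map_mul, ← map_mul, mul_comm]
      rw [mul_assoc (S.D k), e, ← mul_assoc, ← mul_assoc, K_D, smul_mul_assoc, smul_mul_assoc,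
        mul_assoc (S.D k)]
      simp) hφ
  have hf0 : f = 0 := by
    rw [← Finsupp.support_eq_empty, Finset.eq_empty_iff_forall_notMem]
    intro k hk
    have h3 : (S.D k * S.L (f k)) • w = 0 := LinearMap.congr_fun (key k hk) w
    rw [mul_smul] at h3
    exact Finsupp.mem_support_iff.mp hk (hinj _ (injD k _ h3))
  rw [hf0, map_zero, zero_add]
  exact hj

end
end QS

/-- The concrete algebra -/
noncomputable def qsQS (F : Type u) [Field F] (q : Fˣ) (m : ℕ) :
    QS F q m (QSmithAlgebra F (q : F) m) where
  E := qsE F q m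
  Fp := qsF F q m
  K := ⟨qsK F q m, qsKinv F q m, by
      have := RingQuot.mkAlgHom_rel F (QSmithRel.KKinv (F := F) (q := q) (m := m))
      rwa [map_mul, map_one] at this, by
      have := RingQuot.mkAlgHom_rel F (QSmithRel.KinvK (F := F) (q := q) (m := m))
      rwa [map_mul, map_one] at this⟩
  hKE := by
    have := RingQuot.mkAlgHom_rel F (QSmithRel.KE (F := F) (q := q) (m := m))
    rw [map_mul, map_mul, map_mul, AlgHom.commutes, ← Algebra.smul_def] at this
    simpa [qsE, qsK] using this
  hKF := by
    have := RingQuot.mkAlgHom_rel F (QSmithRel.KF (F := F) (q := q) (m := m))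
    rw [map_mul, map_mul, map_mul, AlgHom.commutes, ← Algebra.smul_def] at this
    simpa [qsF, qsK] using this
  hEF := by
    have := RingQuot.mkAlgHom_rel F (QSmithRel.EF (F := F) (q := q) (m := m))
    rw [map_mul, map_sub, map_mul, map_mul, AlgHom.commutes, ← Algebra.smul_def, map_sub, map_pow,
      map_pow] at this
    rw [zpow_neg, zpow_natCast, ← inv_pow, Units.val_pow_eq_pow_val, Units.val_pow_eq_pow_val]
    exact this
  gen := by
    intro P hE hF hK hKi a
    obtain ⟨x, rfl⟩ := RingQuot.mkAlgHom_surjective F (QSmithRel F (q : F) m) a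
    induction x using FreeAlgebra.induction with
    | grade0 r => rw [AlgHom.commutes]; exact P.algebraMap_mem r
    | grade1 i =>
      fin_cases i
      · exact hE
      · exact hF
      · exact hK
      · exact hKi
    | mul a b ha hb => rw [map_mul]; exact P.mul_mem ha hb
    | add a b ha hb => rw [map_add]; exact P.add_mem ha hb

theorem qsQS_c (F : Type u) [Field F] (q : Fˣ) (m : ℕ) : (qsQS F q m).c = qsC F (q : F) m := by
  unfold QS.c QS.rho qsC
  rw [map_add, map_smul, map_smul, QS.L_T, QS.L_T, zpow_neg, zpow_natCast, ← inv_pow (qsQS F q m).K,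
    Units.val_pow_eq_pow_val, Units.val_pow_eq_pow_val, Algebra.smul_def, Algebra.smul_def,
    ← add_assoc]
  rfl

/-- Over an algebraically closed field of characteristic `≠ 2`, with
`q ≠ 0, ±1` and `q²` not a root of unity, for every simple Whittaker module `V = A·w`,
`E·w = ζ·w` (`ζ ≠ 0`) of the quantum Smith algebra `A` there is `ϑ ∈ F` with
`Ann_A(V) = A·(c − ϑ)`. -/
theorem stmt_19 {F : Type u} [Field F] [IsAlgClosed F] (h2 : (2 : F) ≠ 0)
    (m : ℕ) (hm : 1 ≤ m)
    (q : F) (hq0 : q ≠ 0) (hq1 : q ≠ 1) (hqm1 : q ≠ -1)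
    (hqru : ∀ k : ℕ, 1 ≤ k → (q ^ 2) ^ k ≠ 1)
    (ζ : F) (hζ : ζ ≠ 0)
    (V : Type v) [AddCommGroup V] [Module (QSmithAlgebra F q m) V]
    (hsimple : IsSimpleModule (QSmithAlgebra F q m) V)
    (w : V) (hcyc : ∀ v : V, ∃ a : QSmithAlgebra F q m, a • w = v)
    (hE : qsE F q m • w = algebraMap F (QSmithAlgebra F q m) ζ • w) :
    ∃ ϑ : F,
      {a : QSmithAlgebra F q m | ∀ v : V, a • v = 0} =
        ↑(Ideal.span {qsC F q m - algebraMap F (QSmithAlgebra F q m) ϑ}) := by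
  have hsq : q ^ 2 ≠ 1 := by simpa using hqru 1 le_rfl
  have e2 : q - q⁻¹ ≠ 0 := by
    intro h
    apply hsq
    rw [sub_eq_zero] at h
    rw [pow_two]
    nth_rewrite 2 [h]
    exact mul_inv_cancel₀ hq0
  have e1 : q ^ m - (q ^ m)⁻¹ ≠ 0 := by
    intro h
    apply hqru m hm
    rw [sub_eq_zero] at h
    rw [← pow_mul, mul_comm, pow_mul, pow_two]
    nth_rewrite 2 [h]
    exact mul_inv_cancel₀ (pow_ne_zero _ hq0)
  letI : Module F V := Module.compHom V (algebraMap F (QSmithAlgebra F q m))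
  have hsm : ∀ (r : F) (v : V), r • v = algebraMap F (QSmithAlgebra F q m) r • v := fun _ _ => rfl
  haveI : IsScalarTower F (QSmithAlgebra F q m) V :=
    ⟨fun r a v => by rw [hsm, Algebra.smul_def, mul_smul]⟩
  have hw : w ≠ 0 := by
    rintro rfl
    haveI := IsSimpleModule.nontrivial (QSmithAlgebra F q m) V
    obtain ⟨v, hv⟩ := exists_ne (0 : V)
    obtain ⟨a, ha⟩ := hcyc v
    rw [smul_zero] at ha
    exact hv ha.symm
  obtain ⟨q, rfl⟩ : ∃ q' : Fˣ, (q' : F) = q := ⟨Units.mk0 q hq0, rfl⟩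
  obtain ⟨ϑ, h⟩ := (qsQS F q m).main hm hqru e1 e2 hζ w hw hE
  rw [qsQS_c] at h
  exact ⟨ϑ, h⟩
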